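/- arXiv:2208.04180 — 7 statements merged into one kernel-verified Lean document; each statement's English description precedes it below -/
import Mathlib

section
/- Let Ψ be a parse tree and let α be a height reducing rotation applicable at an inner node v of Ψ. Then (a) the subtree α(Ψ_v) replacing Ψ_v has height exactly height(Ψ_v) − 1, and (b) its total balance satisfies B(α(Ψ_v)) ≤ B(Ψ_v) − 2. -/
/-! ### Parse trees

A parse tree is a finite binary tree in which every inner node has exactly
two children.  Nodes of a parse tree are identified either with the subtree
rooted at them, or with the path (list of booleans, `false` = left,
`true` = right) leading to them from the root. -/

inductive PTree : Type
  | leaf : PTree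
  | node : PTree → PTree → PTree

namespace PTree

/-- The height of a parse tree: the maximal number of nodes on a path from
the root to a leaf (a leaf has height 1). -/
def height : PTree → ℕ
  | leaf => 1
  | node l r => 1 + max l.height r.height

/-- The number of leaves `‖Ψ‖` of a parse tree. -/
def leaves : PTree → ℕ
  | leaf => 1
  | node l r => l.leaves + r.leaves

/-- `balance(v)`: height of the right subtree minus height of the left
subtree (0 for a leaf). -/
def bal : PTree → ℤ
  | leaf => 0
  | node l r => (r.height : ℤ) - (l.height : ℤ)

/-- The absolute balance `|balance(v)|`. -/
def abal (t : PTree) : ℤ := |t.bal|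

/-- `B(Ψ)`: the sum of the absolute balances of all (inner) nodes. -/
def totalBal : PTree → ℤ
  | leaf => 0
  | node l r => |(r.height : ℤ) - (l.height : ℤ)| + l.totalBal + r.totalBal

def isLeaf : PTree → Prop
  | leaf => True
  | node _ _ => False

/-- A node is *green* if `height(Ψ_v) ≤ 10·log₂‖Ψ_v‖` (leaves are green by
convention). -/
def Green (t : PTree) : Prop :=
  t.isLeaf ∨ (t.height : ℝ) ≤ 10 * Real.logb 2 (t.leaves : ℝ)

/-- A node is *yellow* if `height(Ψ_v) − 1 ≤ 10·log₂‖Ψ_v‖ < height(Ψ_v)`. -/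
def Yellow (t : PTree) : Prop :=
  ¬ t.isLeaf ∧ 10 * Real.logb 2 (t.leaves : ℝ) < (t.height : ℝ) ∧
    (t.height : ℝ) - 1 ≤ 10 * Real.logb 2 (t.leaves : ℝ)

/-- A node is *red* if it is neither green nor yellow. -/
def Red (t : PTree) : Prop := ¬ t.Green ∧ ¬ t.Yellow

/-- `IsSubtree t s`: `t` is the subtree of `s` rooted at some node of `s`. -/
inductive IsSubtree : PTree → PTree → Prop
  | refl (t : PTree) : IsSubtree t t
  | left {t l r : PTree} : IsSubtree t l → IsSubtree t (node l r)
  | right {t l r : PTree} : IsSubtree t r → IsSubtree t (node l r)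

/-- The subtree rooted at the node reached by following the path `p`
(`false` = left child, `true` = right child), if it exists. -/
def subtreeAt : PTree → List Bool → Option PTree
  | t, [] => some t
  | leaf, _ :: _ => none
  | node l _, false :: p => subtreeAt l p
  | node _ r, true :: p => subtreeAt r p

/-- Replace the subtree at path `p` by `s`. -/
def replaceAt : PTree → List Bool → PTree → PTree
  | _, [], s => s
  | leaf, _ :: _, _ => leaf
  | node l r, false :: p, s => node (replaceAt l p s) r
  | node l r, true :: p, s => node l (replaceAt r p s)

/-- `onLongPath t p`: the node of `t` reached by the path `p` lies on the
long path `lp(root of t)`.  The long path of `v` is `v` itself if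
`balance(v) = 0` (in particular if `v` is a leaf) and otherwise continues
into the strictly deeper subtree. -/
def onLongPath : PTree → List Bool → Prop
  | _, [] => True
  | leaf, _ :: _ => False
  | node l r, false :: p => r.height < l.height ∧ onLongPath l p
  | node l r, true :: p => l.height < r.height ∧ onLongPath r p

/-- The long path `lp(v)` of (the subtree rooted at) `v`, as the list of the
subtrees rooted at its nodes. -/
def lpList : PTree → List PTree
  | leaf => [leaf]
  | node l r =>
    if l.height = r.height then [node l r]
    else if l.height < r.height then node l r :: lpList r
    else node l r :: lpList l

/-- `IsComb t a b` : `t` is an inner node whose two subtrees are `a` and `b`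
(in either order). -/
def IsComb (t a b : PTree) : Prop := t = node a b ∨ t = node b a

end PTree

/-- Let `α` be a height reducing rotation applicable at an
inner node `v` of a parse tree `Ψ`: before the rotation the subtree `Ψ_v`
(here `before`) has children `w` (combining `Ψ_↑ = up` and `Ψ_→ = stay`) and
`Ψ_↓ = down`; after the rotation the replaced subtree (`after`) has children
`up` and the new node `w'` (combining `down` and `stay`); the rotation is
height reducing, i.e. `height(up) > max(height(down), height(stay))`.
Then (a) `height(α(Ψ_v)) = height(Ψ_v) − 1`, and
(b) `B(α(Ψ_v)) ≤ B(Ψ_v) − 2`. -/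
theorem height_reducing_rotation_height_and_balance
    (up down stay w before after w' : PTree)
    (hw : PTree.IsComb w up stay)
    (hbefore : PTree.IsComb before w down)
    (hw' : PTree.IsComb w' down stay)
    (hafter : PTree.IsComb after up w')
    (hhr : up.height > max down.height stay.height) :
    after.height + 1 = before.height ∧
    after.totalBal ≤ before.totalBal - 2 := by
  have key : ∀ t a b : PTree, PTree.IsComb t a b →
      t.height = 1 + max a.height b.height ∧
      t.totalBal = |(b.height : ℤ) - (a.height : ℤ)| + a.totalBal + b.totalBal := by
    rintro t a b (rfl | rfl)
    · exact ⟨rfl, rfl⟩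
    · refine ⟨by simp only [PTree.height]; omega, ?_⟩
      simp only [PTree.totalBal]
      rw [abs_sub_comm]
      ring
  obtain ⟨h1, b1⟩ := key _ _ _ hw
  obtain ⟨h2, b2⟩ := key _ _ _ hbefore
  obtain ⟨h3, b3⟩ := key _ _ _ hw'
  obtain ⟨h4, b4⟩ := key _ _ _ hafter
  refine ⟨by omega, ?_⟩
  rw [b4, b3, b2, b1]
  simp only [abs_eq_max_neg]
  omega
end

section
/- Let Ψ be a parse tree and let α be a height reducing rotation applicable at an inner node v of Ψ; apply α at v. Then every node of lp⁻¹(v) that was yellow before the rotation is green after the rotation, and every node of lp⁻¹(v) other than v has its absolute balance decreased by exactly one. -/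
theorem PTree.aux_replace (b a : PTree) (hh : b.height = a.height + 1)
    (hl : b.leaves = a.leaves) :
    ∀ (t : PTree) (s : List Bool), t.subtreeAt s = some b → t.onLongPath s →
      t.height = (t.replaceAt s a).height + 1 ∧ t.leaves = (t.replaceAt s a).leaves ∧
      (s ≠ [] → (t.replaceAt s a).abal = t.abal - 1) := by
  intro t
  induction t with
  | leaf =>
    intro s h1 h2
    cases s with
    | nil =>
      simp only [PTree.subtreeAt, Option.some.injEq] at h1
      subst h1
      simpa [PTree.replaceAt] using ⟨hh, hl⟩
    | cons c s => simp [PTree.subtreeAt] at h1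
  | node l r ihl ihr =>
    intro s h1 h2
    cases s with
    | nil =>
      simp only [PTree.subtreeAt, Option.some.injEq] at h1
      subst h1
      simpa [PTree.replaceAt] using ⟨hh, hl⟩
    | cons c s =>
      cases c with
      | false =>
        simp only [PTree.subtreeAt] at h1
        simp only [PTree.onLongPath] at h2
        obtain ⟨e1, e2, -⟩ := ihl s h1 h2.2
        have h3 := h2.1
        simp only [PTree.replaceAt, PTree.height, PTree.leaves, PTree.abal, PTree.bal]
        refine ⟨by omega, by omega, fun _ => ?_⟩
        rw [abs_of_nonpos (by omega), abs_of_nonpos (by omega)]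
        omega
      | true =>
        simp only [PTree.subtreeAt] at h1
        simp only [PTree.onLongPath] at h2
        obtain ⟨e1, e2, -⟩ := ihr s h1 h2.2
        have h3 := h2.1
        simp only [PTree.replaceAt, PTree.height, PTree.leaves, PTree.abal, PTree.bal]
        refine ⟨by omega, by omega, fun _ => ?_⟩
        rw [abs_of_nonneg (by omega), abs_of_nonneg (by omega)]
        omega

theorem PTree.aux_path (a : PTree) (s : List Bool) :
    ∀ (p : List Bool) (T t : PTree), T.subtreeAt p = some t →
      T.subtreeAt (p ++ s) = t.subtreeAt s ∧
      (T.replaceAt (p ++ s) a).subtreeAt p = some (t.replaceAt s a) := by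
  intro p
  induction p with
  | nil =>
    intro T t h
    simp only [PTree.subtreeAt, Option.some.injEq] at h
    subst h
    simp [PTree.subtreeAt]
  | cons c p ih =>
    intro T t h
    cases T with
    | leaf => simp [PTree.subtreeAt] at h
    | node l r =>
      cases c with
      | false => simpa [PTree.subtreeAt, PTree.replaceAt] using ih l t h
      | true => simpa [PTree.subtreeAt, PTree.replaceAt] using ih r t h

/-- Let `α` be a height reducing rotation applicable at the
node `v` of `Ψ` situated at path `q` (before-subtree `before`, with deeper
child `w` combining `up` and `stay`, other child `down`; after-subtree
`after` with children `up` and `w'`, the latter combining `down` and `stay`;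
heights satisfying the height reducing condition).  Apply `α` at `v`, i.e.
replace the subtree at `q` by `after`.  Then every node of `lp⁻¹(v)` (a
prefix-path `p` of `q` whose node has `v` on its long path) that was yellow
before the rotation is green after the rotation, and every node of
`lp⁻¹(v)` other than `v` has its absolute balance decreased by exactly
one. -/
theorem height_reducing_rotation_lp_inv
    (Ψ : PTree) (q : List Bool)
    (up down stay w before after w' : PTree)
    (hq : Ψ.subtreeAt q = some before)
    (hw : PTree.IsComb w up stay)
    (hbefore : PTree.IsComb before w down)
    (hw' : PTree.IsComb w' down stay)
    (hafter : PTree.IsComb after up w')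
    (hhr : up.height > max down.height stay.height) :
    ∀ p, p <+: q →
      ∀ t t', Ψ.subtreeAt p = some t →
        (Ψ.replaceAt q after).subtreeAt p = some t' →
        PTree.onLongPath t (q.drop p.length) →
        (t.Yellow → t'.Green) ∧ (p ≠ q → t'.abal = t.abal - 1) := by
  have hh : before.height = after.height + 1 := by
    rcases hw with rfl | rfl <;> rcases hbefore with rfl | rfl <;>
      rcases hw' with rfl | rfl <;> rcases hafter with rfl | rfl <;>
      simp only [PTree.height] <;> omega
  have hl : before.leaves = after.leaves := by
    rcases hw with rfl | rfl <;> rcases hbefore with rfl | rfl <;>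
      rcases hw' with rfl | rfl <;> rcases hafter with rfl | rfl <;>
      simp only [PTree.leaves] <;> omega
  rintro p ⟨s, rfl⟩ t t' ht ht' hlp
  rw [List.drop_left] at hlp
  obtain ⟨a1, a2⟩ := PTree.aux_path after s p Ψ t ht
  rw [a1] at hq
  rw [a2, Option.some.injEq] at ht'
  subst ht'
  obtain ⟨e1, e2, e3⟩ := PTree.aux_replace before after hh hl t s hq hlp
  refine ⟨fun hy => Or.inr ?_, fun hp => e3 fun hs => hp (by simp [hs])⟩
  have h := hy.2.2
  rw [e1, e2] at h
  push_cast at h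
  linarith
end

section
/- Let Ψ be a parse tree and let α be a height reducing rotation applicable at an inner node v of Ψ. If, before the rotation, every node of Ψ_v is green, then after applying α at v the node w′ (the lower of the two inner nodes created by the rotation, having the subtrees Ψ_↓ and Ψ_→ as children) is green or yellow. -/
theorem PTree.leaves_pos' (t : PTree) : 1 ≤ t.leaves := by
  induction t with
  | leaf => simp [PTree.leaves]
  | node l r h1 h2 => simp only [PTree.leaves]; omega

theorem PTree.green_bound (t : PTree) (ht : t.Green) (n : ℕ) (hn : t.leaves + 1 ≤ n) :
    (t.height : ℝ) ≤ 10 * Real.logb 2 (n : ℝ) := by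
  have hp := t.leaves_pos'
  rcases ht with h | h
  · cases t with
    | leaf =>
      have h2 : (2 : ℝ) ≤ n := by
        have : 2 ≤ n := by omega
        exact_mod_cast this
      have h3 : Real.logb 2 2 ≤ Real.logb 2 (n : ℝ) :=
        Real.logb_le_logb_of_le (by norm_num) (by norm_num) h2
      rw [Real.logb_self_eq_one (by norm_num)] at h3
      simp only [PTree.height, Nat.cast_one]
      linarith
    | node l r => exact h.elim
  · have h3 : Real.logb 2 (t.leaves : ℝ) ≤ Real.logb 2 (n : ℝ) :=
      Real.logb_le_logb_of_le (by norm_num) (by exact_mod_cast hp)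
        (by exact_mod_cast (by omega : t.leaves ≤ n))
    linarith

theorem PTree.node_color (a b : PTree) (ha : a.Green) (hb : b.Green) :
    (PTree.node a b).Green ∨ (PTree.node a b).Yellow := by
  have pa := a.leaves_pos'
  have pb := b.leaves_pos'
  have h1 := a.green_bound ha (a.leaves + b.leaves) (by omega)
  have h2 := b.green_bound hb (a.leaves + b.leaves) (by omega)
  by_cases h : (PTree.node a b).Green
  · exact Or.inl h
  · refine Or.inr ⟨fun h => h.elim, ?_, ?_⟩
    · by_contra hc
      exact h (Or.inr (not_lt.mp hc))
    · simp only [PTree.height, PTree.leaves, Nat.cast_add, Nat.cast_one, Nat.cast_max] at *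
      have := max_le h1 h2
      linarith

/-- Let `α` be a height reducing rotation applicable at an
inner node `v` of `Ψ` (before-subtree `before` with deeper child `w`
combining `up` and `stay` and other child `down`; the new lower node `w'`
of the rotated subtree combines `down` and `stay`).  If before the rotation
every node of `Ψ_v` is green, then after applying `α` the node `w'` is
green or yellow. -/
theorem height_reducing_rotation_wprime_color
    (up down stay w before w' : PTree)
    (hw : PTree.IsComb w up stay)
    (hbefore : PTree.IsComb before w down)
    (hw' : PTree.IsComb w' down stay)
    (hhr : up.height > max down.height stay.height)
    (hgreen : ∀ t, PTree.IsSubtree t before → t.Green) :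
    w'.Green ∨ w'.Yellow := by
  have hd : down.Green := by
    apply hgreen
    rcases hbefore with rfl | rfl
    · exact .right (.refl _)
    · exact .left (.refl _)
  have hs : stay.Green := by
    apply hgreen
    have h1 : PTree.IsSubtree stay w := by
      rcases hw with rfl | rfl
      · exact .right (.refl _)
      · exact .left (.refl _)
    rcases hbefore with rfl | rfl
    · exact .left h1
    · exact .right h1
  rcases hw' with rfl | rfl
  · exact PTree.node_color _ _ hd hs
  · exact PTree.node_color _ _ hs hd
end

section
/- Let Ψ be a parse tree and let α be a height preserving rotation applicable at an inner node v of Ψ with deeper child w, and let v′ and w′ denote the upper and lower inner node of the rotated subtree. Then (a) the rotated subtree α(Ψ_v) has the same height as Ψ_v, (b) |balance(v′)| = |balance(w)| + 1, (c) |balance(w′)| = |balance(v)| − 1, and (d) B(α(Ψ_v)) = B(Ψ_v). -/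
/-- Let `α` be a height preserving rotation applicable at an
inner node `v` of `Ψ` with deeper child `w` (before-subtree `before`, `w`
combining `up` and `stay`, other child `down`; after-subtree `after` whose
root is `v'`, with children `up` and the new lower node `w'` combining
`down` and `stay`; height preserving condition
`height(stay) > max(height(up), height(down))`).  Then
(a) `height(α(Ψ_v)) = height(Ψ_v)`,
(b) `|balance(v')| = |balance(w)| + 1`,
(c) `|balance(w')| = |balance(v)| − 1`, and
(d) `B(α(Ψ_v)) = B(Ψ_v)`. -/
theorem height_preserving_rotation_properties
    (up down stay w before after w' : PTree)
    (hw : PTree.IsComb w up stay)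
    (hbefore : PTree.IsComb before w down)
    (hw' : PTree.IsComb w' down stay)
    (hafter : PTree.IsComb after up w')
    (hhp : stay.height > max up.height down.height) :
    after.height = before.height ∧
    after.abal = w.abal + 1 ∧
    w'.abal = before.abal - 1 ∧
    after.totalBal = before.totalBal := by
  have key : ∀ t a b : PTree, PTree.IsComb t a b →
      t.height = 1 + max a.height b.height ∧
      t.abal = |(b.height : ℤ) - (a.height : ℤ)| ∧
      t.totalBal = |(b.height : ℤ) - (a.height : ℤ)| + a.totalBal + b.totalBal := by
    rintro t a b (rfl | rfl)
    · exact ⟨rfl, rfl, rfl⟩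
    · refine ⟨?_, ?_, ?_⟩
      · simp only [PTree.height, max_comm]
      · simp only [PTree.abal, PTree.bal]
        exact abs_sub_comm _ _
      · simp only [PTree.totalBal]
        rw [abs_sub_comm]
        ring
  obtain ⟨h1, h2, h3⟩ := key _ _ _ hw
  obtain ⟨h4, h5, h6⟩ := key _ _ _ hbefore
  obtain ⟨h7, h8, h9⟩ := key _ _ _ hw'
  obtain ⟨h10, h11, h12⟩ := key _ _ _ hafter
  have hu : up.height < stay.height := lt_of_le_of_lt (le_max_left _ _) hhp
  have hd : down.height < stay.height := lt_of_le_of_lt (le_max_right _ _) hhp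
  rw [max_eq_right hu.le] at h1
  rw [max_eq_right hd.le] at h7
  rw [max_eq_left (by omega)] at h4
  rw [max_eq_right (by omega)] at h10
  rw [abs_of_pos (by omega)] at h2 h3 h8 h9 h11 h12
  rw [abs_of_neg (by omega)] at h5 h6
  refine ⟨?_, ?_, ?_, ?_⟩ <;> omega
end

section
/- Let Ψ be a parse tree all of whose nodes are green or yellow, let v be a yellow node of Ψ, and let lp(v) = v1 ⋯ vk be the long path starting at v. Then k ≥ 8, and |balance(v_i)| ≥ 2 for all 1 ≤ i ≤ 8. -/
namespace PTree

theorem leaves_pos'_s8 (t : PTree) : 1 ≤ t.leaves := by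
  induction t with
  | leaf => simp [leaves]
  | node l r ihl ihr => simp only [leaves]; omega

theorem IsSubtree.trans' {a b c : PTree} (h1 : IsSubtree a b) (h2 : IsSubtree b c) :
    IsSubtree a c := by
  induction h2 with
  | refl => exact h1
  | left _ ih => exact .left ih
  | right _ ih => exact .right ih

theorem logb_pow_ten (t : PTree) :
    10 * Real.logb 2 (t.leaves : ℝ) = Real.logb 2 ((t.leaves : ℝ) ^ 10) := by
  rw [Real.logb_pow]; norm_num

theorem logb_lt {t : PTree} (h : 10 * Real.logb 2 (t.leaves : ℝ) < (t.height : ℝ)) :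
    t.leaves ^ 10 < 2 ^ t.height := by
  have hp : (0 : ℝ) < t.leaves := by exact_mod_cast t.leaves_pos'_s8
  rw [logb_pow_ten, Real.logb_lt_iff_lt_rpow (by norm_num) (by positivity),
    Real.rpow_natCast] at h
  exact_mod_cast h

theorem weak {t : PTree} (h : t.Green ∨ t.Yellow) : 2 ^ t.height ≤ 2 * t.leaves ^ 10 := by
  have key : (t.height : ℝ) - 1 ≤ 10 * Real.logb 2 (t.leaves : ℝ) := by
    rcases h with (h | h) | h
    · cases t with
      | leaf => simp [height, leaves]
      | node l r => exact absurd h (by simp [isLeaf])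
    · linarith
    · exact h.2.2
  have hp : (0 : ℝ) < t.leaves := by exact_mod_cast t.leaves_pos'_s8
  rw [logb_pow_ten, Real.le_logb_iff_rpow_le (by norm_num) (by positivity),
    Real.rpow_sub (by norm_num), Real.rpow_natCast, Real.rpow_one,
    div_le_iff₀ (by norm_num)] at key
  have : (2 : ℝ) ^ t.height ≤ 2 * (t.leaves : ℝ) ^ 10 := by linarith
  exact_mod_cast this

theorem bal_aux {a b x y H j : ℕ} (ha : 2 ^ a ≤ 2 * x ^ 10) (hb : 2 ^ b ≤ 2 * y ^ 10)
    (hHa : H ≤ a + 2) (hHb : H ≤ b + 2) (hj : j ≤ 7) :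
    2 ^ (H + j) ≤ (x + y) ^ 10 := by
  have main : ∀ c z : ℕ, 2 ^ c ≤ 2 * z ^ 10 → H ≤ c + 2 → 2 * z ≤ x + y →
      2 ^ (H + j) ≤ (x + y) ^ 10 := by
    intro c z hc hH hz
    calc 2 ^ (H + j) ≤ 2 ^ (c + 9) := Nat.pow_le_pow_right (by norm_num) (by omega)
      _ = 2 ^ 9 * 2 ^ c := by ring
      _ ≤ 2 ^ 9 * (2 * z ^ 10) := Nat.mul_le_mul_left _ hc
      _ = (2 * z) ^ 10 := by ring
      _ ≤ (x + y) ^ 10 := Nat.pow_le_pow_left hz 10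
  rcases le_total x y with h | h
  · exact main a x ha hHa (by omega)
  · exact main b y hb hHb (by omega)

theorem lp_main (m : ℕ) : ∀ (j : ℕ) (t : PTree), j + m = 8 →
    (∀ s, IsSubtree s t → 2 ^ s.height ≤ 2 * s.leaves ^ 10) →
    t.leaves ^ 10 < 2 ^ (t.height + j) → 11 ≤ t.height + j →
    m ≤ t.lpList.length ∧ ∀ u ∈ t.lpList.take m, 2 ≤ u.abal := by
  induction m with
  | zero => intros; simp
  | succ m ih =>
    intro j t hj hw hlt hh
    cases t with
    | leaf => simp only [height] at hh; omega
    | node l r =>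
      have hl := hw l (.left (.refl l))
      have hr := hw r (.right (.refl r))
      have hb : ¬ (l.height ≤ r.height + 1 ∧ r.height ≤ l.height + 1) := by
        rintro ⟨h1, h2⟩
        have := bal_aux (H := (node l r).height) (j := j) hl hr
          (by simp only [height]; omega) (by simp only [height]; omega) (by omega)
        simp only [leaves] at hlt
        omega
      have hab : 2 ≤ (node l r).abal := by
        simp only [abal, bal]
        rw [le_abs]; omega
      by_cases hlr : l.height < r.height
      · have e : (node l r).height + j = r.height + (j + 1) := by simp only [height]; omega
        rw [e] at hlt hh
        have := ih (j + 1) r (by omega) (fun s hs => hw s (.right hs))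
          (lt_of_le_of_lt (Nat.pow_le_pow_left (by simp [leaves]) 10) hlt) hh
        rw [lpList, if_neg (by omega), if_pos hlr]
        simpa [hab] using this
      · have e : (node l r).height + j = l.height + (j + 1) := by simp only [height]; omega
        rw [e] at hlt hh
        have := ih (j + 1) l (by omega) (fun s hs => hw s (.left hs))
          (lt_of_le_of_lt (Nat.pow_le_pow_left (by simp [leaves]) 10) hlt) hh
        rw [lpList, if_neg (by omega), if_neg hlr]
        simpa [hab] using this

end PTree

/-- Let `Ψ` be a parse tree all of whose nodes are green or
yellow, and let `v` be a yellow node of `Ψ` with long path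
`lp(v) = v₁ ⋯ v_k`.  Then `k ≥ 8` and `|balance(v_i)| ≥ 2` for all
`1 ≤ i ≤ 8`. -/
theorem yellow_node_long_path_imbalanced
    (Ψ v : PTree)
    (hsub : PTree.IsSubtree v Ψ)
    (hgy : ∀ t, PTree.IsSubtree t Ψ → t.Green ∨ t.Yellow)
    (hy : v.Yellow) :
    8 ≤ v.lpList.length ∧ ∀ u ∈ v.lpList.take 8, 2 ≤ u.abal := by
  have hlt := PTree.logb_lt hy.2.1
  refine PTree.lp_main 8 0 v rfl (fun s hs => PTree.weak (hgy s (hs.trans' hsub))) hlt ?_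
  cases v with
  | leaf => exact absurd trivial hy.1
  | node l r =>
    have h2 : 2 ≤ (PTree.node l r).leaves := by
      have := l.leaves_pos'_s8
      have := r.leaves_pos'_s8
      simp only [PTree.leaves]; omega
    have h3 : 2 ^ 10 < 2 ^ (PTree.node l r).height :=
      lt_of_le_of_lt (Nat.pow_le_pow_left h2 10) hlt
    have := (Nat.pow_lt_pow_iff_right (by norm_num : 1 < 2)).1 h3
    omega
end

section
/- Let Ψ be a parse tree satisfying the deletion invariant, i.e., for every node v of Ψ that is not green, deficit(v) := 2^(height(Ψ_v)/10) − ‖Ψ_v‖ satisfies deficit(v) ≤ (height(Ψ_v)·‖Ψ_v‖ − B(Ψ_v)) / (20·height(Ψ_v)). Then every node of Ψ is green or yellow. -/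
/-- `deficit(v) = 2^(height(Ψ_v)/10) − ‖Ψ_v‖`: the number of leaves that need
to be inserted into `Ψ_v` without increasing its height in order to make `v`
green. -/
noncomputable def PTree.deficit (t : PTree) : ℝ :=
  (2 : ℝ) ^ ((t.height : ℝ) / 10) - (t.leaves : ℝ)

theorem PTree.totalBal_nonneg_aux (t : PTree) : 0 ≤ t.totalBal := by
  induction t with
  | leaf => simp [PTree.totalBal]
  | node l r hl hr =>
    simp only [PTree.totalBal]
    positivity

theorem PTree.leaves_pos_aux (t : PTree) : 0 < t.leaves := by
  induction t with
  | leaf => simp [PTree.leaves]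
  | node l r hl hr => simp only [PTree.leaves]; omega

theorem PTree.height_pos_aux (t : PTree) : 0 < t.height := by
  cases t <;> simp only [PTree.height] <;> omega

theorem two_rpow_tenth_aux : (21 / 20 : ℝ) ≤ 2 ^ ((1 : ℝ) / 10) := by
  have h : ((2 : ℝ) ^ ((1 : ℝ) / 10)) ^ 10 = 2 := by
    rw [← Real.rpow_natCast, ← Real.rpow_mul (by norm_num)]
    norm_num
  refine le_of_pow_le_pow_left₀ (n := 10) (by norm_num) (by positivity) ?_
  rw [h]
  norm_num

/-- Let `Ψ` be a parse tree satisfying the deletion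
invariant: for every node `v` of `Ψ` that is not green,
`deficit(v) ≤ (height(Ψ_v)·‖Ψ_v‖ − B(Ψ_v)) / (20·height(Ψ_v))`.
Then every node of `Ψ` is green or yellow. -/
theorem deletion_invariant_no_red_nodes
    (Ψ : PTree)
    (hdel : ∀ t, PTree.IsSubtree t Ψ → ¬ t.Green →
      t.deficit ≤ ((t.height : ℝ) * (t.leaves : ℝ) - (t.totalBal : ℝ)) /
        (20 * (t.height : ℝ))) :
    ∀ t, PTree.IsSubtree t Ψ → t.Green ∨ t.Yellow := by
  intro t ht
  by_cases hg : t.Green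
  · exact Or.inl hg
  right
  have hd := hdel t ht hg
  have hB : (0 : ℝ) ≤ (t.totalBal : ℝ) := by exact_mod_cast t.totalBal_nonneg_aux
  have hn : (0 : ℝ) < (t.leaves : ℝ) := by exact_mod_cast t.leaves_pos_aux
  have hh : (0 : ℝ) < (t.height : ℝ) := by exact_mod_cast t.height_pos_aux
  rw [le_div_iff₀ (by positivity), PTree.deficit] at hd
  have hg' := hg
  simp only [PTree.Green, not_or, not_le] at hg'
  refine ⟨hg'.1, hg'.2, ?_⟩
  have h1 : (2 : ℝ) ^ ((t.height : ℝ) / 10) ≤ 21 / 20 * (t.leaves : ℝ) := by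
    by_contra hc
    push Not at hc
    nlinarith [mul_pos (sub_pos.mpr hc) hh]
  have h2 : (2 : ℝ) ^ ((t.height : ℝ) / 10)
      = 2 ^ (((t.height : ℝ) - 1) / 10) * 2 ^ ((1 : ℝ) / 10) := by
    rw [← Real.rpow_add (by norm_num)]
    congr 1
    ring
  have h3 : (0 : ℝ) < 2 ^ (((t.height : ℝ) - 1) / 10) := by positivity
  have h4 : (2 : ℝ) ^ (((t.height : ℝ) - 1) / 10) ≤ (t.leaves : ℝ) := by
    rw [h2] at h1
    nlinarith [mul_le_mul_of_nonneg_left two_rpow_tenth_aux h3.le]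
  have h5 := (Real.le_logb_iff_rpow_le (by norm_num : (1 : ℝ) < 2) hn).2 h4
  linarith
end

section
/- For every finite set Q, the transition algebra over Q — with horizontal carrier H = 𝒫(Q×Q), vertical carrier V = 𝒫((Q×Q)×(Q×Q)), neutral elements id_Q = {(q,q) | q ∈ Q} and id_{Q×Q} = {((q1,q2),(q1,q2)) | (q1,q2) ∈ Q×Q}, and the five operations F1 ⊕_HH F2 = {(q1,q3) | ∃q2: (q1,q2) ∈ F1 and (q2,q3) ∈ F2}; C1 ⊙_VV C2 = {((q1,q2),(q5,q6)) | ∃(q3,q4): ((q1,q2),(q3,q4)) ∈ C1 and ((q3,q4),(q5,q6)) ∈ C2}; C ⊙_VH F = {(q1,q2) | ∃(q3,q4): ((q1,q2),(q3,q4)) ∈ C and (q3,q4) ∈ F}; F ⊕_HV C = {((q1,q3),(q4,q5)) | ∃q2: (q1,q2) ∈ F and ((q2,q3),(q4,q5)) ∈ C}; C ⊕_VH F = {((q1,q5),(q3,q4)) | ∃q2: ((q1,q2),(q3,q4)) ∈ C and (q2,q5) ∈ F} — satisfies all fourteen forest-algebra axioms A1–A14. -/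
/-- The operations and neutral elements of a (candidate) forest algebra:
`hh` = ⊕_HH, `hv` = ⊕_HV, `vh` = ⊕_VH, `vv` = ⊙_VV, `vhd` = ⊙_VH,
`eps` = ε (neutral element of H), `box` = □ (neutral element of V). -/
structure ForestAlgebraOps (H V : Type*) where
  hh : H → H → H
  hv : H → V → V
  vh : V → H → V
  vv : V → V → V
  vhd : V → H → H
  eps : H
  box : V

/-- The fourteen forest-algebra axioms A1–A14. -/
def IsForestAlgebra {H V : Type*} (A : ForestAlgebraOps H V) : Prop :=
  -- (A1)
  (∀ F, A.hh A.eps F = F) ∧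
  (∀ F, A.hh F A.eps = F) ∧
  -- (A2)
  (∀ C, A.hv A.eps C = C) ∧
  (∀ C, A.vh C A.eps = C) ∧
  -- (A3)
  (∀ C, A.vv A.box C = C) ∧
  (∀ C, A.vv C A.box = C) ∧
  -- (A4)
  (∀ F, A.vhd A.box F = F) ∧
  -- (A5)
  (∀ F1 F2 F3, A.hh (A.hh F1 F2) F3 = A.hh F1 (A.hh F2 F3)) ∧
  -- (A6)
  (∀ F1 F2 C, A.hv (A.hh F1 F2) C = A.hv F1 (A.hv F2 C)) ∧
  -- (A7)
  (∀ C F1 F2, A.vh (A.vh C F1) F2 = A.vh C (A.hh F1 F2)) ∧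
  -- (A8)
  (∀ F1 C F2, A.vh (A.hv F1 C) F2 = A.hv F1 (A.vh C F2)) ∧
  -- (A9)
  (∀ C1 C2 C3, A.vv (A.vv C1 C2) C3 = A.vv C1 (A.vv C2 C3)) ∧
  -- (A10)
  (∀ C1 C2 F, A.vhd (A.vv C1 C2) F = A.vhd C1 (A.vhd C2 F)) ∧
  -- (A11)
  (∀ F1 C1 F2, A.vhd (A.hv F1 C1) F2 = A.hh F1 (A.vhd C1 F2)) ∧
  -- (A12)
  (∀ F1 C1 C2, A.vv (A.hv F1 C1) C2 = A.hv F1 (A.vv C1 C2)) ∧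
  -- (A13)
  (∀ C1 F1 F2, A.vhd (A.vh C1 F1) F2 = A.hh (A.vhd C1 F2) F1) ∧
  -- (A14)
  (∀ C1 F1 C2, A.vv (A.vh C1 F1) C2 = A.vh (A.vv C1 C2) F1)

/-- The transition algebra over a set of states `Q`: the horizontal carrier is
`𝒫(Q×Q)`, the vertical carrier is `𝒫((Q×Q)×(Q×Q))`, the neutral elements are
the identity relations, and all five operations are relational joins. -/
def transitionAlgebraOps (Q : Type) :
    ForestAlgebraOps (Set (Q × Q)) (Set ((Q × Q) × (Q × Q))) where
  hh F1 F2 := {x | ∃ q1 q2 q3, (q1, q2) ∈ F1 ∧ (q2, q3) ∈ F2 ∧ x = (q1, q3)}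
  hv F C := {x | ∃ q1 q2 q3 q4 q5,
    (q1, q2) ∈ F ∧ ((q2, q3), (q4, q5)) ∈ C ∧ x = ((q1, q3), (q4, q5))}
  vh C F := {x | ∃ q1 q2 q3 q4 q5,
    ((q1, q2), (q3, q4)) ∈ C ∧ (q2, q5) ∈ F ∧ x = ((q1, q5), (q3, q4))}
  vv C1 C2 := {x | ∃ q1 q2 q3 q4 q5 q6,
    ((q1, q2), (q3, q4)) ∈ C1 ∧ ((q3, q4), (q5, q6)) ∈ C2 ∧ x = ((q1, q2), (q5, q6))}
  vhd C F := {x | ∃ q1 q2 q3 q4,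
    ((q1, q2), (q3, q4)) ∈ C ∧ (q3, q4) ∈ F ∧ x = (q1, q2)}
  eps := {x | ∃ q, x = (q, q)}
  box := {x | ∃ p, x = (p, p)}

/-- For every finite set `Q`, the transition algebra over `Q`
satisfies all fourteen forest-algebra axioms A1–A14. -/
theorem transition_algebra_is_forest_algebra (Q : Type) [Fintype Q] :
    IsForestAlgebra (transitionAlgebraOps Q) := by
  refine ⟨?_, ?_, ?_, ?_, ?_, ?_, ?_, ?_, ?_, ?_, ?_, ?_, ?_, ?_, ?_, ?_, ?_⟩ <;> intros <;>
    ext x <;>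
    simp only [transitionAlgebraOps, Set.mem_setOf_eq, Prod.exists, Prod.mk.injEq] <;>
    constructor <;> first | grind | aesop
end
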